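/- arXiv:2512.25029 — 2 statements merged into one kernel-verified Lean document; each statement's English description precedes it below -/
import Mathlib

section
/- Let X be a topological space such that (i) the space ConnectedComponents X of connected components of X, endowed with the quotient topology, is compact, Hausdorff and totally disconnected (i.e. profinite), and (ii) every connected component of X contains a point to which all points of that component specialize (for every x there exists x₀ in the connected component of x with y ⤳ x₀ for every y in that component). Then for every open subset V of X that is stable under specialization: the family of clopen subsets of X contained in V is directed under inclusion (it is closed under finite unions) and its union is exactly V; in particular, every point x ∈ V lies in some clopen subset Z of X with Z ⊆ V. -/
/-!
Let `π : X → ConnectedComponents X` be the quotient map. An open set is stable under generalization,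
so an open set `V` stable under specialization contains every point joined to one of its points by
a zigzag of specializations. In particular `V` is a union of connected components, hence `V` is the
preimage of `π '' V`, which is open by definition of the quotient topology. In a profinite space the
clopen sets form a basis, and the preimages under `π` of the clopen subsets of `π '' V` cover `V`.
-/

open Set TopologicalSpace

section

variable {X : Type*} [TopologicalSpace X] {V : Set X}

theorem mem_iff_mem_of_eqvGen_specializes (hsp : StableUnderSpecialization V)
    (hgen : StableUnderGeneralization V) {x y : X} (hxy : Relation.EqvGen (· ⤳ ·) x y) :
    x ∈ V ↔ y ∈ V := by
  induction hxy with
  | rel _ _ h => exact ⟨hsp h, hgen h⟩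
  | refl _ => rfl
  | symm _ _ _ ih => exact ih.symm
  | trans _ _ _ _ _ ih₁ ih₂ => exact ih₁.trans ih₂

theorem eqvGen_specializes_of_common_specialization {x y z : X} (hxz : x ⤳ z) (hyz : y ⤳ z) :
    Relation.EqvGen (· ⤳ ·) x y :=
  .trans _ _ _ (.rel _ _ hxz) (.symm _ _ (.rel _ _ hyz))

theorem connectedComponents_preimage_image_eq_self_iff :
    ConnectedComponents.mk ⁻¹' (ConnectedComponents.mk '' V) = V ↔
      ∀ x ∈ V, connectedComponent x ⊆ V := by
  rw [connectedComponents_preimage_image, ← iUnion₂_subset_iff]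
  exact ⟨Eq.subset, fun h ↦ h.antisymm fun _ hx ↦ mem_biUnion hx mem_connectedComponent⟩

theorem exists_isClopen_subset_of_connectedComponent_subset
    (hbasis : IsTopologicalBasis {W : Set (ConnectedComponents X) | IsClopen W})
    (hV : IsOpen V) (hVcomp : ∀ x ∈ V, connectedComponent x ⊆ V) {x : X} (hx : x ∈ V) :
    ∃ Z : Set X, IsClopen Z ∧ Z ⊆ V ∧ x ∈ Z := by
  have hpre : ConnectedComponents.mk ⁻¹' (ConnectedComponents.mk '' V) = V :=
    connectedComponents_preimage_image_eq_self_iff.2 hVcomp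
  have himage : IsOpen (ConnectedComponents.mk '' V) := by
    rwa [← ConnectedComponents.isQuotientMap_coe.isOpen_preimage, hpre]
  obtain ⟨W, hW, hxW, hWV⟩ :=
    hbasis.exists_subset_of_mem_open (mem_image_of_mem ConnectedComponents.mk hx) himage
  exact ⟨ConnectedComponents.mk ⁻¹' W, hW.preimage ConnectedComponents.continuous_coe,
    (preimage_mono hWV).trans hpre.subset, hxW⟩

end

theorem stmt_1_general {X : Type*} [TopologicalSpace X]
    (hbasis : IsTopologicalBasis {W : Set (ConnectedComponents X) | IsClopen W})
    (hcomp : ∀ x : X, ∀ y ∈ connectedComponent x, Relation.EqvGen (· ⤳ ·) x y)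
    (V : Set X) (hV : IsOpen V) (hsp : StableUnderSpecialization V) :
    (∀ Z₁ Z₂ : Set X, IsClopen Z₁ → Z₁ ⊆ V → IsClopen Z₂ → Z₂ ⊆ V →
        IsClopen (Z₁ ∪ Z₂) ∧ Z₁ ∪ Z₂ ⊆ V) ∧
      DirectedOn (· ⊆ ·) {Z : Set X | IsClopen Z ∧ Z ⊆ V} ∧
      ⋃₀ {Z : Set X | IsClopen Z ∧ Z ⊆ V} = V ∧
      ∀ x ∈ V, ∃ Z : Set X, IsClopen Z ∧ Z ⊆ V ∧ x ∈ Z := by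
  have hunion : ∀ Z₁ Z₂ : Set X, IsClopen Z₁ → Z₁ ⊆ V → IsClopen Z₂ → Z₂ ⊆ V →
      IsClopen (Z₁ ∪ Z₂) ∧ Z₁ ∪ Z₂ ⊆ V :=
    fun _ _ h₁ h₁V h₂ h₂V ↦ ⟨h₁.union h₂, union_subset h₁V h₂V⟩
  have hVcomp : ∀ x ∈ V, connectedComponent x ⊆ V := fun x hx y hy ↦
    (mem_iff_mem_of_eqvGen_specializes hsp hV.stableUnderGeneralization (hcomp x y hy)).1 hx
  have hclopen : ∀ x ∈ V, ∃ Z : Set X, IsClopen Z ∧ Z ⊆ V ∧ x ∈ Z := fun _ ↦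
    exists_isClopen_subset_of_connectedComponent_subset hbasis hV hVcomp
  refine ⟨hunion, directedOn_of_sup_mem fun Z₁ Z₂ h₁ h₂ ↦ hunion Z₁ Z₂ h₁.1 h₁.2 h₂.1 h₂.2,
    (sUnion_subset fun _ hZ ↦ hZ.2).antisymm fun x hx ↦ ?_, hclopen⟩
  obtain ⟨Z, hZ, hZV, hxZ⟩ := hclopen x hx
  exact mem_sUnion_of_mem hxZ ⟨hZ, hZV⟩

/-- Suppose the space of connected components of `X` is profinite (compact,
Hausdorff and totally disconnected) and every connected component of `X` contains
a point to which all points of that component specialize. Then for every open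
subset `V` of `X` stable under specialization, the family of clopen subsets of `X`
contained in `V` is directed under inclusion (being closed under finite unions)
and its union is exactly `V`; in particular every `x ∈ V` lies in a clopen subset
of `X` contained in `V`. -/
theorem stmt_1 {X : Type*} [TopologicalSpace X]
    [CompactSpace (ConnectedComponents X)] [T2Space (ConnectedComponents X)]
    [TotallyDisconnectedSpace (ConnectedComponents X)]
    (hcomp : ∀ x : X, ∃ x₀ ∈ connectedComponent x,
      ∀ y ∈ connectedComponent x, y ⤳ x₀)
    (V : Set X) (hV : IsOpen V) (hsp : StableUnderSpecialization V) :
    (∀ Z₁ Z₂ : Set X, IsClopen Z₁ → Z₁ ⊆ V → IsClopen Z₂ → Z₂ ⊆ V →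
        IsClopen (Z₁ ∪ Z₂) ∧ Z₁ ∪ Z₂ ⊆ V) ∧
      DirectedOn (· ⊆ ·) {Z : Set X | IsClopen Z ∧ Z ⊆ V} ∧
      ⋃₀ {Z : Set X | IsClopen Z ∧ Z ⊆ V} = V ∧
      ∀ x ∈ V, ∃ Z : Set X, IsClopen Z ∧ Z ⊆ V ∧ x ∈ Z := by
  refine stmt_1_general isTopologicalBasis_isClopen (fun x y hy ↦ ?_) V hV hsp
  obtain ⟨x₀, -, hx₀⟩ := hcomp x
  exact eqvGen_specializes_of_common_specialization (hx₀ x mem_connectedComponent) (hx₀ y hy)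
end

section
/- Let C be a preadditive category with finite biproducts and all small colimits (for example, the category of modules over a ring). Let Stonean denote the category of extremally disconnected compact Hausdorff spaces, equipped with the coherent Grothendieck topology. Then for every small category J and every diagram F : J ⥤ Sheaf (coherentTopology Stonean) C of C-valued sheaves, the colimit of the underlying presheaves (which is computed objectwise in C) is again a sheaf for the coherent topology; equivalently, the inclusion functor from C-valued sheaves on Stonean to C-valued presheaves preserves all small colimits, so colimits of sheaves require no sheafification. -/
open CategoryTheory CategoryTheory.Limits

universe u v w

open Opposite

/-!
Sheaves on `Stonean` are the presheaves preserving finite products. In `C` finite products are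
finite coproducts, so that objectwise colimits of such presheaves are again such presheaves.

This says nothing about the colimits of sheaves that are too large to be computed objectwise
in `C`. For these, one shows that a cocone of product-preserving presheaves which is universal among
product-preserving presheaves is universal among all presheaves. Let `f : F ⟶ N` be a map from a
product-preserving presheaf to an arbitrary one. As extremally disconnected spaces are projective,
the counit of the Stone–Čech adjunction splits objectwise, which reduces the problem to presheaves
on types. A section of `F` over `S` extends by zero to `Option S`, and its pullback along partial
functions `X ⇀ S` is then additive in the partial function. Hence the map from `F` to the linear
extension of `N`, evaluated at the free abelian group on the partial functions, factors through the
group of formal sums of partial functions, and this gives a product-preserving presheaf. The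
factorization requires that group to be projective: it embeds into the group of locally constant
integer-valued functions on a profinite set, which is free by Nöbeling's theorem. Since `N` is an
objectwise split subobject of these linear extensions as `X` varies, the maps to them can be glued
along pushouts.

The linear extension needs coproducts indexed by the types in question. If `C` lacks them for size
reasons, its Hom sets are so small that every product-preserving presheaf vanishes.
-/

theorem baer_quotient_finsupp_rat {ι : Type*} (K : Submodule ℤ (ι →₀ ℚ)) :
    Module.Baer ℤ ((ι →₀ ℚ) ⧸ K) := by
  have : DivisibleBy (ι →₀ ℚ) ℤ :=
    { div v n := (n : ℚ)⁻¹ • v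
      div_zero v := by simp
      div_cancel {n} v hn := by
        rw [← Int.cast_smul_eq_zsmul ℚ, smul_inv_smul₀ (Int.cast_ne_zero.2 hn)] }
  have := Function.Surjective.divisibleBy (α := ℤ) K.mkQ K.mkQ_surjective
    fun v n => K.mkQ.map_smul n v
  exact Module.Baer.of_divisible _

/- The ring `ℤ` is hereditary because quotients of injective `ℤ`-modules are injective: a map from a
submodule of `P` to a quotient of `M →₀ ℚ` extends to `P`, and then lifts to `M →₀ ℚ`. -/
theorem projective_of_injective_linearMap {M P : Type*} [AddCommGroup M] [AddCommGroup P]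
    [Module.Projective ℤ P] (f : M →ₗ[ℤ] P) (hf : Function.Injective f) :
    Module.Projective ℤ M := by
  let π : (M →₀ ℤ) →ₗ[ℤ] M := Finsupp.linearCombination ℤ id
  have hπ : Function.Surjective π := Finsupp.linearCombination_id_surjective ℤ M
  let j : (M →₀ ℤ) →ₗ[ℤ] (M →₀ ℚ) := Finsupp.mapRange.linearMap (Algebra.linearMap ℤ ℚ)
  have hj : Function.Injective j := Finsupp.mapRange_injective _ (map_zero _) Int.cast_injective
  let K : Submodule ℤ (M →₀ ℚ) := (LinearMap.ker π).map j
  let φ : M →ₗ[ℤ] (M →₀ ℚ) ⧸ K :=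
    (LinearMap.ker π).mapQ K j (Submodule.le_comap_map _ _) ∘ₗ
      (π.quotKerEquivOfSurjective hπ).symm.toLinearMap
  have hφ (y : M →₀ ℤ) : φ (π y) = K.mkQ (j y) :=
    congrArg _ (π.quotKerEquivOfSurjective_symm_apply hπ y)
  obtain ⟨ψ, hψ⟩ := (baer_quotient_finsupp_rat K).extension_property f hf φ
  obtain ⟨χ, hχ⟩ := Module.projective_lifting_property K.mkQ ψ K.mkQ_surjective
  have hχf (m : M) : ∃ y, j y = χ (f m) ∧ π y = m := by
    obtain ⟨y, rfl⟩ := hπ m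
    obtain ⟨z, hz, hjz⟩ : χ (f (π y)) - j y ∈ K := by
      rw [← Submodule.Quotient.eq]
      exact (LinearMap.congr_fun hχ _).trans ((LinearMap.congr_fun hψ _).trans (hφ y))
    exact ⟨z + y, by rw [map_add, hjz, sub_add_cancel],
      by rw [map_add, LinearMap.mem_ker.1 hz, zero_add]⟩
  let s := LinearMap.codRestrictOfInjective (χ ∘ₗ f) j hj fun m =>
    (hχf m).imp fun _ h => h.1
  refine .of_split s π (LinearMap.ext fun m => ?_)
  obtain ⟨y, hy, hm⟩ := hχf m
  have hs : s m = y := hj ((LinearMap.codRestrictOfInjective_comp_apply _ _ _ _ m).trans hy.symm)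
  rw [LinearMap.comp_apply, LinearMap.id_apply, hs, hm]

/-- A pointed-type-valued function on `X` stands for a partial function on `X`, undefined where
it takes the value `T.point`. `IsSum a b c` says that the graph of `a` is the disjoint union of
the graphs of `b` and `c`, whose domains are disjoint. -/
def IsSum {X : Type w} {T : Pointed.{w}} (a b c : X → T) : Prop :=
  ∀ x, (b x = T.point ∧ a x = c x) ∨ (c x = T.point ∧ a x = b x)

namespace IsSum

variable {X Y : Type w} {S T : Pointed.{w}}

lemma comp_right {a b c : X → T} (h : IsSum a b c) (e : Y → X) :
    IsSum (a ∘ e) (b ∘ e) (c ∘ e) :=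
  fun y => h (e y)

lemma map {a b c : X → S} (h : IsSum a b c) (φ : S ⟶ T) :
    IsSum (φ.toFun ∘ a) (φ.toFun ∘ b) (φ.toFun ∘ c) :=
  fun x => (h x).imp
    (fun ⟨hb, ha⟩ => ⟨(congrArg φ.toFun hb).trans φ.map_point, congrArg φ.toFun ha⟩)
    (fun ⟨hc, ha⟩ => ⟨(congrArg φ.toFun hc).trans φ.map_point, congrArg φ.toFun ha⟩)

end IsSum

/-- A partial function together with a decomposition as a sum of two. -/
structure SumTriple (X : Type w) (T : Pointed.{w}) : Type w where
  total : X → T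
  left : X → T
  right : X → T
  isSum : IsSum total left right

instance (T : Pointed.{w}) : Nonempty T := ⟨T.point⟩

instance (X : Type w) (T : Pointed.{w}) : Nonempty (SumTriple X T) :=
  ⟨⟨fun _ => T.point, fun _ => T.point, fun _ => T.point, fun _ => .inl ⟨rfl, rfl⟩⟩⟩

/-- The formal differences `[a] - [b] - [c]` for `a` the sum of `b` and `c`. -/
noncomputable def sumRelation (X : Type w) (T : Pointed.{w}) :
    (SumTriple X T →₀ ℤ) →ₗ[ℤ] ((X → T) →₀ ℤ) :=
  Finsupp.lmapDomain ℤ ℤ SumTriple.total - Finsupp.lmapDomain ℤ ℤ SumTriple.left -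
    Finsupp.lmapDomain ℤ ℤ SumTriple.right

/-- The universal abelian group receiving an additive map from partial functions. -/
abbrev PartialSums (X : Type w) (T : Pointed.{w}) : Type w :=
  ((X → T) →₀ ℤ) ⧸ LinearMap.range (sumRelation X T)

namespace PartialSums

variable {X : Type w} {T : Pointed.{w}}

/-- The class of a partial function. -/
noncomputable def cls (e : X → T) : PartialSums X T :=
  Submodule.Quotient.mk (Finsupp.single e 1)

lemma cls_eq_add {a b c : X → T} (h : IsSum a b c) : cls a = cls b + cls c := by
  rw [cls, cls, cls, ← Submodule.Quotient.mk_add, Submodule.Quotient.eq]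
  exact ⟨Finsupp.single ⟨a, b, c, h⟩ 1, by simp [sumRelation, sub_sub]⟩

/-- The universal property of `PartialSums X T`. -/
noncomputable def lift {M : Type*} [AddCommGroup M] (g : (X → T) → M)
    (hg : ∀ a b c, IsSum a b c → g a = g b + g c) : PartialSums X T →ₗ[ℤ] M :=
  Submodule.liftQ _ (Finsupp.linearCombination ℤ g) <| by
    rw [LinearMap.range_le_ker_iff]
    ext ⟨a, b, c, h⟩ : 2
    simp [sumRelation, hg a b c h]

@[simp]
lemma lift_cls {M : Type*} [AddCommGroup M] (g : (X → T) → M)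
    (hg : ∀ a b c, IsSum a b c → g a = g b + g c) (e : X → T) : lift g hg (cls e) = g e := by
  simp [lift, cls]

lemma hom_ext {M : Type*} [AddCommGroup M] {f g : PartialSums X T →ₗ[ℤ] M}
    (h : ∀ e, f (cls e) = g (cls e)) : f = g := by
  ext e
  exact h e

lemma cls_point : cls (fun _ : X => T.point) = 0 := by
  simpa using cls_eq_add (a := fun _ : X => T.point) (b := fun _ => T.point)
    (c := fun _ => T.point) fun _ => .inl ⟨rfl, rfl⟩

open Classical in
lemma cls_piecewise_preimage {τ : Type*} (e : X → T) (p : X → τ) (s : Finset τ) :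
    cls ((p ⁻¹' s).piecewise e fun _ => T.point) =
      ∑ b ∈ s, cls ((p ⁻¹' {b}).piecewise e fun _ => T.point) := by
  induction s using Finset.induction_on with
  | empty =>
    rw [Finset.coe_empty, Set.preimage_empty, Set.piecewise_empty, cls_point, Finset.sum_empty]
  | insert b s hb ih =>
    rw [Finset.sum_insert hb, ← ih]
    refine cls_eq_add fun x => ?_
    by_cases h : p x = b
    · right; simp [Set.piecewise, h, hb]
    · left; simp [Set.piecewise, h]

lemma sum_smul_cls_eq_zero_of_disjoint {ι : Type*} {s : Finset ι} {n : ι → ℤ} {e : ι → X → T}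
    [∀ x t, DecidablePred fun i => e i x = t]
    (he : ∀ i ∈ s, ∀ j ∈ s, ∀ x, e i x = e j x → e i x = T.point ∨ e i = e j)
    (hn : ∀ x, ∀ t ≠ T.point, ∑ i ∈ s with e i x = t, n i = 0) :
    ∑ i ∈ s, n i • cls (e i) = 0 := by
  classical
  rw [← Finset.sum_fiberwise_of_maps_to (g := e) (t := s.image e)
    fun i => Finset.mem_image_of_mem e]
  refine Finset.sum_eq_zero fun g hg => ?_
  obtain ⟨j, hj, rfl⟩ := Finset.mem_image.1 hg
  rw [Finset.sum_congr rfl fun i hi => by rw [(Finset.mem_filter.1 hi).2], ← Finset.sum_smul]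
  by_cases hpt : ∃ x, e j x ≠ T.point
  · obtain ⟨x, hx⟩ := hpt
    have : s.filter (e · = e j) = s.filter (e · x = e j x) :=
      Finset.filter_congr fun i hi => ⟨fun h => congrFun h x, fun h =>
        (he i hi j hj x h).resolve_left (h ▸ hx)⟩
    rw [this, hn x _ hx, zero_smul]
  · rw [not_exists_not] at hpt
    rw [funext hpt, cls_point, smul_zero]

/- The domain is cut into the finitely many regions on which the pattern of coincidences between
the partial functions is constant; on each of them any two are equal or have disjoint graphs. -/
lemma sum_smul_cls_eq_zero {ι : Type*} {s : Finset ι} {n : ι → ℤ} {e : ι → X → T}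
    [∀ x t, DecidablePred fun i => e i x = t]
    (hn : ∀ x, ∀ t ≠ T.point, ∑ i ∈ s with e i x = t, n i = 0) :
    ∑ i ∈ s, n i • cls (e i) = 0 := by
  classical
  let p (x : X) : Finset (ι × ι) := {ij ∈ s ×ˢ s | e ij.1 x = e ij.2 x}
  let r (b : Finset (ι × ι)) (i : ι) : X → T := (p ⁻¹' {b}).piecewise (e i) fun _ => T.point
  have cls_eq_sum (i : ι) : cls (e i) = ∑ b ∈ (s ×ˢ s).powerset, cls (r b i) := by
    have : p ⁻¹' ((s ×ˢ s).powerset : Finset _) = Set.univ :=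
      Set.eq_univ_of_forall fun x => Finset.mem_powerset.2 (Finset.filter_subset _ _)
    rw [← cls_piecewise_preimage, this, Set.piecewise_univ]
  simp_rw [cls_eq_sum, Finset.smul_sum]
  rw [Finset.sum_comm]
  refine Finset.sum_eq_zero fun b _ => sum_smul_cls_eq_zero_of_disjoint ?_ ?_
  · intro i hi j hj x hx
    by_cases hxb : p x = b
    · right
      have hij : (i, j) ∈ b := by
        rw [← hxb]
        exact Finset.mem_filter.2 ⟨Finset.mk_mem_product hi hj, by simpa [r, hxb] using hx⟩
      funext y
      by_cases hyb : p y = b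
      · rw [← hyb] at hij
        simpa [r, hyb] using (Finset.mem_filter.1 hij).2
      · simp [r, hyb]
    · left; simp [r, hxb]
  · intro x t ht
    by_cases hxb : p x = b
    · simpa [r, hxb] using hn x t ht
    · simp [r, hxb, ht.symm]

lemma mk_eq_sum_cls (ξ : (X → T) →₀ ℤ) :
    (Submodule.Quotient.mk ξ : PartialSums X T) = ∑ e ∈ ξ.support, ξ e • cls e := by
  conv_lhs => rw [← ξ.sum_single, Finsupp.sum, ← Submodule.mkQ_apply, map_sum]
  refine Finset.sum_congr rfl fun e _ => ?_
  rw [cls, ← Submodule.Quotient.mk_smul, Finsupp.smul_single_one, Submodule.mkQ_apply]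

/-- The graph of a partial function, as a clopen subset of the Stone–Čech compactification of
the discrete space `X × (T ∖ {T.point})`. -/
def graph (e : X → T) : Set (Ultrafilter (X × {t : T // t ≠ T.point})) :=
  {u | {q | e q.1 = q.2} ∈ u}

lemma isClopen_graph (e : X → T) : IsClopen (graph e) :=
  ⟨ultrafilter_isClosed_basic _, ultrafilter_isOpen_basic _⟩

lemma charFn_graph_eq_add {a b c : X → T} (h : IsSum a b c) :
    LocallyConstant.charFn ℤ (isClopen_graph a) =
      LocallyConstant.charFn ℤ (isClopen_graph b) +
        LocallyConstant.charFn ℤ (isClopen_graph c) := by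
  have hdisj : Disjoint (graph b) (graph c) := Set.disjoint_left.2 fun u hb hc => by
    obtain ⟨⟨x, t, ht⟩, hbx, hcx⟩ := u.nonempty_of_mem (Filter.inter_mem hb hc)
    rcases h x with ⟨hx, _⟩ | ⟨hx, _⟩
    · exact ht (hbx.symm.trans hx)
    · exact ht (hcx.symm.trans hx)
  have hunion : graph a = graph b ∪ graph c := by
    ext u
    refine Iff.trans ?_ Ultrafilter.union_mem_iff
    refine iff_of_eq (congrArg (· ∈ u) (Set.ext fun ⟨x, t, ht⟩ => ?_))
    rcases h x with ⟨hx, ha⟩ | ⟨hx, ha⟩ <;> simp [hx, ha, ht.symm]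
  apply LocallyConstant.coe_injective
  rw [LocallyConstant.coe_add, LocallyConstant.coe_charFn, LocallyConstant.coe_charFn,
    LocallyConstant.coe_charFn, hunion, Set.indicator_union_of_disjoint hdisj]
  rfl

/-- Formal sums of partial functions as locally constant functions. -/
noncomputable def toLocallyConstant (X : Type w) (T : Pointed.{w}) : PartialSums X T →ₗ[ℤ]
    LocallyConstant (Ultrafilter (X × {t : T // t ≠ T.point})) ℤ :=
  lift (fun e => LocallyConstant.charFn ℤ (isClopen_graph e)) fun _ _ _ => charFn_graph_eq_add

lemma toLocallyConstant_cls (e : X → T) :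
    toLocallyConstant X T (cls e) = LocallyConstant.charFn ℤ (isClopen_graph e) :=
  lift_cls ..

lemma toLocallyConstant_injective : Function.Injective (toLocallyConstant X T) := by
  classical
  rw [injective_iff_map_eq_zero]
  intro m hm
  obtain ⟨ξ, rfl⟩ := Submodule.Quotient.mk_surjective _ m
  rw [mk_eq_sum_cls] at hm ⊢
  refine sum_smul_cls_eq_zero fun x t ht => ?_
  have := congrArg (LocallyConstant.evalₗ ℤ (pure (x, ⟨t, ht⟩))) hm
  simpa [-zsmul_eq_mul, toLocallyConstant_cls, LocallyConstant.coe_charFn, graph,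
    Set.indicator_apply, Finset.sum_filter] using this

instance : Module.Projective ℤ (PartialSums X T) := by
  have : Module.Free ℤ (LocallyConstant (Ultrafilter (X × {t : T // t ≠ T.point})) ℤ) :=
    LocallyConstant.freeOfProfinite (Profinite.of _)
  exact projective_of_injective_linearMap _ toLocallyConstant_injective

end PartialSums

/-- The free abelian group functor. Unlike in `ModuleCat.free`, the universe of the types is not
tied to that of the coefficient ring. -/
noncomputable def intFree : Type w ⥤ ModuleCat.{w} ℤ where
  obj Y := ModuleCat.of ℤ (Y →₀ ℤ)
  map f := ModuleCat.ofHom (Finsupp.lmapDomain ℤ ℤ f)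
  map_id _ := ModuleCat.hom_ext (Finsupp.lmapDomain_id ℤ ℤ)
  map_comp f g := ModuleCat.hom_ext (Finsupp.lmapDomain_comp ℤ ℤ f g)

instance (Y : Type w) : Projective (intFree.obj Y) :=
  (IsProjective.iff_projective (Y →₀ ℤ)).1 inferInstance

lemma intFree_map_invFun {Y Z : Type w} [Nonempty Z] (f : Z ⟶ Y) {ξ : Y →₀ ℤ}
    (hξ : ↑ξ.support ⊆ Set.range f) :
    intFree.map f (intFree.map (TypeCat.ofHom (Function.invFun f)) ξ) = ξ := by
  refine Finsupp.mapDomain_comp.symm.trans ((Finsupp.mapDomain_congr fun y hy => ?_).trans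
    Finsupp.mapDomain_id)
  exact Function.invFun_eq (hξ hy)

namespace AdditiveExtension

/-- A type which is large enough to index the union of the supports of the values of a linear
map from `M` to a free abelian group. -/
abbrev Support (M : ModuleCat.{w} ℤ) : Type w := ℕ × M

variable {M N : ModuleCat.{w} ℤ} {Y Z : Type w}

lemma exists_comp_intFree_map_eq [Nonempty Y] (h : M ⟶ intFree.obj Y) :
    ∃ (f : Support M ⟶ Y) (k : M ⟶ intFree.obj (Support M)), k ≫ intFree.map f = h := by
  have (m : M) : ∃ e : ℕ → Y, ((h m : Y →₀ ℤ).support : Set Y) ⊆ Set.range e := by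
    obtain ⟨y⟩ := ‹Nonempty Y›
    obtain ⟨e, he⟩ := ((h m : Y →₀ ℤ).support.countable_toSet.insert y).exists_eq_range
      (Set.insert_nonempty _ _)
    exact ⟨e, he ▸ Set.subset_insert _ _⟩
  choose e he using this
  let f : Support M ⟶ Y := TypeCat.ofHom fun p => e p.2 p.1
  refine ⟨f, h ≫ intFree.map (TypeCat.ofHom (Function.invFun f)), ?_⟩
  ext m : 2
  exact intFree_map_invFun f ((he m).trans fun _ ⟨n, hn⟩ => ⟨(n, m), hn⟩)

lemma exists_common_comp_eq (f₁ f₂ : Support M ⟶ Y) :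
    ∃ (f : Support M ⟶ Y) (g₁ g₂ : Support M ⟶ Support M), g₁ ≫ f = f₁ ∧ g₂ ≫ f = f₂ := by
  let e : ℕ × M ⊕ ℕ × M ≃ ℕ × M :=
    (Equiv.sumProdDistrib ℕ ℕ M).symm.trans (Equiv.natSumNatEquivNat.prodCongr (Equiv.refl M))
  refine ⟨TypeCat.ofHom (Sum.elim f₁ f₂ ∘ e.symm), TypeCat.ofHom (e ∘ Sum.inl),
    TypeCat.ofHom (e ∘ Sum.inr), ?_, ?_⟩ <;>
  · ext
    simp

variable {C : Type u} [Category.{v} C] [Preadditive C] (D : (Type w)ᵒᵖ ⥤ C)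

/-- The map obtained from the restrictions to the points of `Y` by linearity. -/
noncomputable def evalPoints (Y : Type w) :
    (Y →₀ ℤ) →ₗ[ℤ] (D.obj (op Y) ⟶ D.obj (op PUnit)) :=
  Finsupp.linearCombination ℤ fun y => D.map (TypeCat.ofHom fun _ => y).op

lemma map_comp_evalPoints (f : Y ⟶ Z) (ξ : Y →₀ ℤ) :
    D.map f.op ≫ evalPoints D Y ξ = evalPoints D Z (intFree.map f ξ) := by
  change _ = Finsupp.linearCombination ℤ _ (Finsupp.mapDomain f ξ)
  rw [evalPoints, Finsupp.linearCombination_mapDomain, Finsupp.linearCombination_apply,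
    Finsupp.linearCombination_apply, Finsupp.sum, Finsupp.sum, Preadditive.comp_sum]
  simp_rw [Preadditive.comp_zsmul, ← D.map_comp]
  rfl

variable [HasCoproducts.{w} C] [HasCokernels C]

/-- The index type of the relations between the generators of `obj M D`. -/
abbrev RelationIndex (M : ModuleCat.{w} ℤ) : Type w :=
  (Support M ⟶ Support M) × (M ⟶ intFree.obj (Support M)) × (M ⟶ intFree.obj (Support M))

/-- The relation making the generators of `obj M D` additive, and natural in the type that
indexes the basis. -/
noncomputable def relation (r : RelationIndex M) :
    D.obj (op (Support M)) ⟶ ∐ fun _ : M ⟶ intFree.obj (Support M) => D.obj (op (Support M)) :=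
  let ι := Limits.Sigma.ι fun _ : M ⟶ intFree.obj (Support M) => D.obj (op (Support M))
  ι ((r.2.1 + r.2.2) ≫ intFree.map r.1) - D.map r.1.op ≫ (ι r.2.1 + ι r.2.2)

variable (M) in
/-- The map whose cokernel imposes all the `relation`s. -/
noncomputable abbrev relations : (∐ fun _ : RelationIndex M => D.obj (op (Support M))) ⟶
    ∐ fun _ : M ⟶ intFree.obj (Support M) => D.obj (op (Support M)) :=
  Limits.Sigma.desc (relation D)

variable (M) in
/-- The value at `M` of the additive left Kan extension of `D` along the opposite of the free
abelian group functor: the universal object receiving maps from `D.obj (op Y)` indexed by the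
maps `M ⟶ intFree.obj Y`, additively and naturally in `Y`. -/
noncomputable abbrev obj : C := cokernel (relations M D)

/-- The generators of `obj M D`. -/
noncomputable def gen (h : M ⟶ intFree.obj (Support M)) : D.obj (op (Support M)) ⟶ obj M D :=
  Sigma.ι (fun _ : M ⟶ intFree.obj (Support M) => D.obj (op (Support M))) h ≫
    cokernel.π (relations M D)

lemma gen_add_comp_map (f : Support M ⟶ Support M) (h h' : M ⟶ intFree.obj (Support M)) :
    gen D ((h + h') ≫ intFree.map f) = D.map f.op ≫ (gen D h + gen D h') := by
  have hr := Sigma.ι_desc (fun r : RelationIndex M => relation D r) (f, h, h')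
  have hcoker := hr =≫ cokernel.π (relations M D)
  rw [Category.assoc, relations, cokernel.condition, comp_zero, relation, Preadditive.sub_comp]
    at hcoker
  rw [gen, gen, gen, ← Preadditive.add_comp, ← Category.assoc]
  exact sub_eq_zero.1 hcoker.symm

lemma gen_add (h h' : M ⟶ intFree.obj (Support M)) : gen D (h + h') = gen D h + gen D h' := by
  simpa using gen_add_comp_map D (𝟙 _) h h'

lemma map_comp_gen (f : Support M ⟶ Support M) (h : M ⟶ intFree.obj (Support M)) :
    D.map f.op ≫ gen D h = gen D (h ≫ intFree.map f) := by
  have gen_zero : gen D (0 : M ⟶ _) = 0 := by simpa using gen_add D (0 : M ⟶ _) 0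
  simpa [gen_zero] using (gen_add_comp_map D f h 0).symm

lemma map_comp_gen_congr {f₁ f₂ : Support M ⟶ Y} {k₁ k₂ : M ⟶ intFree.obj (Support M)}
    (h : k₁ ≫ intFree.map f₁ = k₂ ≫ intFree.map f₂) :
    D.map f₁.op ≫ gen D k₁ = D.map f₂.op ≫ gen D k₂ := by
  obtain ⟨f, g₁, g₂, rfl, rfl⟩ := exists_common_comp_eq f₁ f₂
  let r : Y ⟶ Support M := TypeCat.ofHom (Function.invFun f)
  have hr : f ≫ r ≫ f = f := by
    ext x
    exact Function.invFun_eq ⟨x, rfl⟩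
  have key (g : Support M ⟶ Support M) (k : M ⟶ intFree.obj (Support M)) :
      D.map (g ≫ f).op ≫ gen D k =
        D.map f.op ≫ gen D ((k ≫ intFree.map (g ≫ f)) ≫ intFree.map r) := by
    rw [Category.assoc, ← intFree.map_comp, ← map_comp_gen, ← D.map_comp_assoc, ← op_comp,
      Category.assoc, Category.assoc, hr]
  rw [key, key, h]

/-- The canonical map attached to a linear map from `M` to a free abelian group. -/
noncomputable def inn [Nonempty Y] (h : M ⟶ intFree.obj Y) : D.obj (op Y) ⟶ obj M D :=
  D.map (exists_comp_intFree_map_eq h).choose.op ≫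
    gen D (exists_comp_intFree_map_eq h).choose_spec.choose

lemma map_comp_gen_eq_inn [Nonempty Y] (f : Support M ⟶ Y) (k : M ⟶ intFree.obj (Support M)) :
    D.map f.op ≫ gen D k = inn D (k ≫ intFree.map f) :=
  map_comp_gen_congr D (exists_comp_intFree_map_eq (k ≫ intFree.map f)).choose_spec.choose_spec.symm

lemma gen_eq_inn (k : M ⟶ intFree.obj (Support M)) : gen D k = inn D k := by
  simpa using map_comp_gen_eq_inn D (𝟙 _) k

lemma map_comp_inn [Nonempty Y] [Nonempty Z] (f : Y ⟶ Z) (h : M ⟶ intFree.obj Y) :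
    D.map f.op ≫ inn D h = inn D (h ≫ intFree.map f) := by
  obtain ⟨g, k, rfl⟩ := exists_comp_intFree_map_eq h
  rw [← map_comp_gen_eq_inn, ← D.map_comp_assoc, ← op_comp, map_comp_gen_eq_inn,
    intFree.map_comp, Category.assoc]

lemma inn_add [Nonempty Y] (h h' : M ⟶ intFree.obj Y) :
    inn D (h + h') = inn D h + inn D h' := by
  obtain ⟨f₁, k₁, rfl⟩ := exists_comp_intFree_map_eq h
  obtain ⟨f₂, k₂, rfl⟩ := exists_comp_intFree_map_eq h'
  obtain ⟨f, g₁, g₂, rfl, rfl⟩ := exists_common_comp_eq f₁ f₂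
  simp only [intFree.map_comp, ← Category.assoc, ← Preadditive.add_comp, ← map_comp_gen_eq_inn,
    gen_add, Preadditive.comp_add]

lemma inn_sub [Nonempty Y] (h h' : M ⟶ intFree.obj Y) :
    inn D (h - h') = inn D h - inn D h' := by
  rw [eq_sub_iff_add_eq, ← inn_add, sub_add_cancel]

variable {D} in
lemma hom_ext {A : C} {f g : obj M D ⟶ A}
    (h : ∀ k : M ⟶ intFree.obj (Support M), inn D k ≫ f = inn D k ≫ g) : f = g := by
  rw [← cancel_epi (cokernel.π (relations M D))]
  refine Sigma.hom_ext _ _ fun k => ?_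
  simpa only [← gen_eq_inn, gen, Category.assoc] using h k

section desc

variable {A : C} (θ : ∀ (Y : Type w) [Nonempty Y], (M ⟶ intFree.obj Y) → (D.obj (op Y) ⟶ A))
  (map_comp : ∀ {Y Z : Type w} [Nonempty Y] [Nonempty Z] (f : Y ⟶ Z) (h : M ⟶ intFree.obj Y),
    D.map f.op ≫ θ Y h = θ Z (h ≫ intFree.map f))
  (map_add : ∀ (Y : Type w) [Nonempty Y] (h h' : M ⟶ intFree.obj Y), θ Y (h + h') = θ Y h + θ Y h')

/-- The map out of `obj M D` induced by a compatible additive family of maps. -/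
noncomputable def desc : obj M D ⟶ A :=
  cokernel.desc _ (Limits.Sigma.desc fun k => θ (Support M) k) <| Sigma.hom_ext _ _ fun r => by
    simp [relation, map_comp, map_add, Preadditive.sub_comp, Preadditive.comp_add]

lemma inn_desc [Nonempty Y] (h : M ⟶ intFree.obj Y) :
    inn D h ≫ desc D θ map_comp map_add = θ Y h := by
  obtain ⟨f, k, rfl⟩ := exists_comp_intFree_map_eq h
  rw [← map_comp_gen_eq_inn, Category.assoc, ← map_comp]
  simp [gen, desc]

end desc

/-- Functoriality of `obj`, by precomposition. -/
noncomputable def map (μ : N ⟶ M) : obj M D ⟶ obj N D :=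
  desc D (fun _ _ h => inn D (μ ≫ h)) (fun f h => by rw [map_comp_inn, Category.assoc])
    (fun _ _ h h' => by rw [Preadditive.comp_add, inn_add])

@[simp]
lemma inn_map [Nonempty Y] (h : M ⟶ intFree.obj Y) (μ : N ⟶ M) :
    inn D h ≫ map D μ = inn D (μ ≫ h) :=
  inn_desc D _ (fun f h => by rw [map_comp_inn, Category.assoc]) _ h

/-- The map out of `obj M D` obtained by evaluating linear maps at `m`. -/
noncomputable def evalAt (m : M) : obj M D ⟶ D.obj (op PUnit) :=
  desc D (fun Y _ h => evalPoints D Y (h m)) (fun f h => map_comp_evalPoints D f (h m))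
    (fun Y _ h h' => map_add (evalPoints D Y) (h m) (h' m))

lemma inn_evalAt [Nonempty Y] {h : M ⟶ intFree.obj Y} {m : M} {y : Y}
    (hm : h m = Finsupp.single y 1) :
    inn D h ≫ evalAt D m = D.map (TypeCat.ofHom fun _ => y).op := by
  refine (inn_desc D _ (fun f h => map_comp_evalPoints D f (h m)) _ h).trans ?_
  rw [hm, evalPoints, Finsupp.linearCombination_single, one_smul]

lemma map_hom_add (μ ν : N ⟶ M) : map D (μ + ν) = map D μ + map D ν :=
  hom_ext fun k => by simp only [Preadditive.comp_add, Preadditive.add_comp, inn_map, inn_add]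

/-- The additive left Kan extension of `D` along the opposite of the free abelian group
functor. -/
noncomputable def functor : (ModuleCat.{w} ℤ)ᵒᵖ ⥤ C where
  obj M := obj M.unop D
  map μ := map D μ.unop
  map_id M := hom_ext fun k => by simp
  map_comp μ ν := hom_ext fun k => by simp [← Category.assoc (inn D k)]

instance : (functor D).Additive where
  map_add {_ _ μ ν} := map_hom_add D μ.unop ν.unop

end AdditiveExtension

/-- The functor of partial functions on `X`. -/
def partialFunctions (X : Type w) : Pointed.{w} ⥤ Type w where
  obj T := X → T
  map φ := TypeCat.ofHom (φ.toFun ∘ ·)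

namespace PartialSums

variable (X : Type w)

variable {X} in
/-- Functoriality of `PartialSums`. -/
noncomputable def map {S T : Pointed.{w}} (φ : S ⟶ T) : PartialSums X S →ₗ[ℤ] PartialSums X T :=
  lift (fun e => cls (φ.toFun ∘ e)) fun _ _ _ h => cls_eq_add (h.map φ)

variable {X} in
@[simp]
lemma map_cls {S T : Pointed.{w}} (φ : S ⟶ T) (e : X → S) : map φ (cls e) = cls (φ.toFun ∘ e) :=
  lift_cls ..

/-- `PartialSums X T` as a functor of `T`. -/
noncomputable def functor : Pointed.{w} ⥤ ModuleCat.{w} ℤ where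
  obj T := ModuleCat.of ℤ (PartialSums X T)
  map φ := ModuleCat.ofHom (map φ)
  map_id _ := ModuleCat.hom_ext <| hom_ext fun e => map_cls _ e
  map_comp φ ψ := ModuleCat.hom_ext <| hom_ext fun e => by simp [Function.comp_assoc]

section

variable (T : Pointed.{w})

/-- The projection from the free abelian group on the partial functions. -/
noncomputable def proj : intFree.obj (X → T) ⟶ (functor X).obj T :=
  ModuleCat.ofHom (X := (X → T) →₀ ℤ) (LinearMap.range (sumRelation X T)).mkQ

instance : Epi (proj X T) := (ModuleCat.epi_iff_surjective _).2 (Submodule.mkQ_surjective _)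

instance : Projective ((functor X).obj T) :=
  (IsProjective.iff_projective (PartialSums X T)).1 inferInstance

/-- A section of the projection, which is not natural in `T`. -/
noncomputable def splitting : (functor X).obj T ⟶ intFree.obj (X → T) :=
  Projective.factorThru (𝟙 _) (proj X T)

@[simp]
lemma splitting_proj : splitting X T ≫ proj X T = 𝟙 _ := Projective.factorThru_comp _ _

/-- The formal differences `[a] - [b] - [c]` for `a` the sum of `b` and `c`, as a morphism. -/
noncomputable def relation : intFree.obj (SumTriple X T) ⟶ intFree.obj (X → T) :=
  intFree.map (TypeCat.ofHom SumTriple.total) - intFree.map (TypeCat.ofHom SumTriple.left) -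
    intFree.map (TypeCat.ofHom SumTriple.right)

end

variable {X} {S T : Pointed.{w}}

lemma exists_comp_relation_eq_sub {M : ModuleCat.{w} ℤ} [Projective M]
    {h h' : M ⟶ intFree.obj (X → T)} (hh : h ≫ proj X T = h' ≫ proj X T) :
    ∃ k, k ≫ relation X T = h - h' := by
  let s : ShortComplex (ModuleCat.{w} ℤ) :=
    .mk (relation X T) (proj X T) (ModuleCat.hom_ext (LinearMap.range_mkQ_comp (sumRelation X T)))
  have hs : s.Exact := s.moduleCat_exact_iff_range_eq_ker.2
    (Submodule.ker_mkQ (LinearMap.range (sumRelation X T))).symm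
  exact ⟨hs.liftFromProjective (h - h') (by rw [Preadditive.sub_comp]; exact sub_eq_zero.2 hh),
    hs.liftFromProjective_comp _ _⟩

lemma map_proj (φ : S ⟶ T) :
    intFree.map (TypeCat.ofHom (φ.toFun ∘ ·)) ≫ proj X T = proj X S ≫ (functor X).map φ :=
  ModuleCat.hom_ext <| Finsupp.lhom_ext' fun e => LinearMap.ext_ring <| by
    refine Eq.trans ?_ (map_cls φ e).symm
    exact congrArg _ (Finsupp.mapDomain_single (f := (φ.toFun ∘ ·)))

variable (X) in
/-- The projections as a natural transformation. -/
noncomputable def π : partialFunctions X ⋙ intFree ⟶ functor X where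
  app T := proj X T
  naturality _ _ φ := map_proj φ

lemma functor_map_eq_add {α β γ : S ⟶ T}
    (h : IsSum α.toFun β.toFun γ.toFun) :
    (functor X).map α = (functor X).map β + (functor X).map γ := by
  have : map (X := X) α = map β + map γ := hom_ext fun e => by
    rw [LinearMap.add_apply, map_cls, map_cls, map_cls, cls_eq_add (h.comp_right e)]
  exact congrArg ModuleCat.ofHom this

end PartialSums

/-- An identification `A ⊔ B ≃ Z` exhibits `Z` as a product of `A` and `B` in the opposite of the
category of types. -/
noncomputable def typeOpFanIsLimit {A B Z : Type w} {i : A → Z} {j : B → Z}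
    (h : Function.Bijective (Sum.elim i j)) :
    IsLimit (BinaryFan.mk (TypeCat.ofHom i).op (TypeCat.ofHom j).op) :=
  BinaryCofan.IsColimit.op (c := BinaryCofan.mk (TypeCat.ofHom i) (TypeCat.ofHom j)) <|
    IsColimit.ofIsoColimit (Types.binaryCoproductColimit A B) <|
      Cocone.ext (Equiv.ofBijective _ h).toIso (by rintro ⟨_ | _⟩ <;> rfl)

section ProductPreserving

variable {C : Type u} [Category.{v} C]

lemma preservesFiniteProducts_of_sum {G : (Type w)ᵒᵖ ⥤ C}
    (h₀ : IsTerminal (G.obj (op PEmpty)))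
    (h : ∀ A B : Type w, Nonempty (IsLimit (BinaryFan.mk
      (G.map (TypeCat.ofHom (Sum.inl : A → A ⊕ B)).op)
      (G.map (TypeCat.ofHom (Sum.inr : B → A ⊕ B)).op)))) :
    PreservesFiniteProducts G := by
  have : PreservesLimit (Functor.empty.{0} (Type w)ᵒᵖ) G :=
    preservesLimit_of_preserves_limit_cone (terminalOpOfInitial Types.isInitialPEmpty)
      ((isLimitMapConeEmptyConeEquiv G _).symm h₀)
  have := preservesLimitsOfShape_pempty_of_preservesTerminal G
  have (A B : Type w) : PreservesLimit (pair (op A) (op B)) G :=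
    preservesLimit_of_preserves_limit_cone
      (typeOpFanIsLimit (i := (Sum.inl : A → A ⊕ B)) (j := Sum.inr)
        (by rw [Sum.elim_inl_inr]; exact Function.bijective_id))
      ((isLimitMapConeBinaryFanEquiv G _ _).symm (h A B).some)
  have : PreservesLimitsOfShape (Discrete WalkingPair) G :=
    ⟨fun {K} => preservesLimit_of_iso_diagram G (diagramIsoPair K).symm⟩
  exact .of_preserves_binary_and_terminal G

variable [Preadditive C]

/-- The pointed map that sends the first of two disjoint sets to the base point. -/
def collapseLeft (A B : Type w) : typeToPointed.obj (A ⊕ B) ⟶ typeToPointed.obj B :=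
  ⟨fun x => x.bind Sum.getRight?, rfl⟩

/-- The pointed map that sends the second of two disjoint sets to the base point. -/
def collapseRight (A B : Type w) : typeToPointed.obj (A ⊕ B) ⟶ typeToPointed.obj A :=
  ⟨fun x => x.bind Sum.getLeft?, rfl⟩

lemma isSum_id_collapse (A B : Type w) :
    IsSum (𝟙 (typeToPointed.obj (A ⊕ B)) : typeToPointed.obj (A ⊕ B) ⟶ _).toFun
      (collapseRight A B ≫ typeToPointed.map (TypeCat.ofHom Sum.inl)).toFun
      (collapseLeft A B ≫ typeToPointed.map (TypeCat.ofHom Sum.inr)).toFun := by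
  rintro (_ | _ | _)
  exacts [.inl ⟨rfl, rfl⟩, .inr ⟨rfl, rfl⟩, .inl ⟨rfl, rfl⟩]

lemma preservesFiniteProducts_typeToPointed_op_comp {G : Pointed.{w}ᵒᵖ ⥤ C}
    (hG : ∀ {S T : Pointed.{w}} {α β γ : S ⟶ T}, IsSum α.toFun β.toFun γ.toFun →
      G.map α.op = G.map β.op + G.map γ.op) :
    PreservesFiniteProducts (typeToPointed.{w}.op ⋙ G) := by
  have map_eq_zero {S T : Pointed.{w}} {α : S ⟶ T} (h : ∀ x, α.toFun x = T.point) :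
      G.map α.op = 0 := by
    simpa using hG (α := α) (β := α) (γ := α) fun x => .inl ⟨h x, rfl⟩
  have map_eq_id {S : Pointed.{w}} {α : S ⟶ S} (h : ∀ x, α.toFun x = x) : G.map α.op = 𝟙 _ := by
    rw [show α = 𝟙 S from Pointed.Hom.ext (funext h), op_id, G.map_id]
  refine preservesFiniteProducts_of_sum (IsZero.isTerminal ?_) fun A B => ?_
  · rw [IsZero.iff_id_eq_zero]
    exact (G.map_id _).symm.trans (map_eq_zero (α := 𝟙 _) (by rintro (_ | ⟨⟨⟩⟩); rfl))
  · let il : typeToPointed.obj A ⟶ typeToPointed.obj (A ⊕ B) :=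
      typeToPointed.map (TypeCat.ofHom Sum.inl)
    let ir : typeToPointed.obj B ⟶ typeToPointed.obj (A ⊕ B) :=
      typeToPointed.map (TypeCat.ofHom Sum.inr)
    let b : BinaryBicone (G.obj (op (typeToPointed.obj A))) (G.obj (op (typeToPointed.obj B))) :=
      { pt := G.obj (op (typeToPointed.obj (A ⊕ B)))
        fst := G.map il.op
        snd := G.map ir.op
        inl := G.map (collapseRight A B).op
        inr := G.map (collapseLeft A B).op
        inl_fst := by rw [← G.map_comp, ← op_comp, map_eq_id]; rintro (_ | _) <;> rfl
        inl_snd := by rw [← G.map_comp, ← op_comp, map_eq_zero]; rintro (_ | _) <;> rfl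
        inr_fst := by rw [← G.map_comp, ← op_comp, map_eq_zero]; rintro (_ | _) <;> rfl
        inr_snd := by rw [← G.map_comp, ← op_comp, map_eq_id]; rintro (_ | _) <;> rfl }
    have total : b.fst ≫ b.inl + b.snd ≫ b.inr = 𝟙 b.pt := by
      rw [← G.map_id]
      exact (congrArg₂ (· + ·) (G.map_comp _ _) (G.map_comp _ _)).symm.trans
        (hG (isSum_id_collapse A B)).symm
    exact ⟨(isBinaryBilimitOfTotal b total).isLimit⟩

end ProductPreserving

section Restriction

variable {C : Type u} [Category.{v} C]

/-- The restriction map along a function of a presheaf on the category of types. -/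
abbrev restr (F : (Type w)ᵒᵖ ⥤ C) {Y Z : Type w} (f : Y → Z) : F.obj (op Z) ⟶ F.obj (op Y) :=
  F.map (TypeCat.ofHom f).op

lemma restr_comp_restr (F : (Type w)ᵒᵖ ⥤ C) {X Y Z : Type w} (f : X → Y) (g : Y → Z) :
    restr F g ≫ restr F f = restr F (g ∘ f) :=
  (F.map_comp _ _).symm

lemma restr_naturality {F G : (Type w)ᵒᵖ ⥤ C} (α : F ⟶ G) {Y Z : Type w} (f : Y → Z) :
    restr F f ≫ α.app _ = α.app _ ≫ restr G f :=
  α.naturality _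

section ExtendZero

variable (F : (Type w)ᵒᵖ ⥤ C) [PreservesFiniteProducts F]

/-- A product-preserving presheaf turns disjoint unions into products. -/
noncomputable def restrFanIsLimit {A B Z : Type w} {i : A → Z} {j : B → Z}
    (h : Function.Bijective (Sum.elim i j)) :
    IsLimit (BinaryFan.mk (restr F i) (restr F j)) :=
  isLimitMapConeBinaryFanEquiv F _ _ (isLimitOfPreserves F (typeOpFanIsLimit h))

lemma bijective_elim_some_none (S : Type w) :
    Function.Bijective (Sum.elim (.some : S → Option S) fun _ : PUnit.{w + 1} => none) :=
  ((Equiv.optionEquivSumPUnit S).symm).bijective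

variable {F} in
lemma hom_ext_option {A : C} {S : Type w} {f g : A ⟶ F.obj (op (Option S))}
    (hsome : f ≫ restr F .some = g ≫ restr F .some)
    (hnone : f ≫ restr F (fun _ : PUnit.{w + 1} => none) = g ≫ restr F fun _ => none) :
    f = g :=
  BinaryFan.IsLimit.hom_ext (restrFanIsLimit F (bijective_elim_some_none S)) hsome hnone

variable {F} in
lemma hom_ext_compl {A : C} {X : Type w} (p : X → Prop) {f g : A ⟶ F.obj (op X)}
    (hp : f ≫ restr F (Subtype.val : {x // p x} → X) = g ≫ restr F Subtype.val)
    (hnot : f ≫ restr F (Subtype.val : {x // ¬ p x} → X) = g ≫ restr F Subtype.val) : f = g := by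
  classical
  exact BinaryFan.IsLimit.hom_ext
    (restrFanIsLimit F (i := Subtype.val) (j := Subtype.val) (Equiv.sumCompl p).bijective) hp hnot

section

variable [HasZeroMorphisms C]

/-- Extension by zero along the inclusion of `S` in `Option S`. -/
noncomputable def extendZero (S : Type w) : F.obj (op S) ⟶ F.obj (op (Option S)) :=
  (restrFanIsLimit F (bijective_elim_some_none S)).lift (BinaryFan.mk (𝟙 _) 0)

lemma extendZero_some (S : Type w) : extendZero F S ≫ restr F .some = 𝟙 _ :=
  (restrFanIsLimit F (bijective_elim_some_none S)).fac _ ⟨.left⟩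

lemma extendZero_none (S X : Type w) : extendZero F S ≫ restr F (fun _ : X => none) = 0 := by
  have fac : extendZero F S ≫ restr F (fun _ : PUnit.{w + 1} => none) = 0 :=
    (restrFanIsLimit F (bijective_elim_some_none S)).fac _ ⟨.right⟩
  calc
    _ = (extendZero F S ≫ restr F fun _ : PUnit.{w + 1} => none) ≫ restr F fun _ : X => ⟨⟩ := by
      rw [Category.assoc, restr_comp_restr]
    _ = 0 := by rw [fac, zero_comp]

lemma extendZero_restr {S S' : Type w} (φ : S → S') :
    extendZero F S' ≫ restr F (Option.map φ) = restr F φ ≫ extendZero F S := by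
  apply hom_ext_option
  · rw [Category.assoc, Category.assoc, extendZero_some, restr_comp_restr, Category.comp_id]
    change _ ≫ restr F (some ∘ φ) = _
    rw [← restr_comp_restr, ← Category.assoc, extendZero_some, Category.id_comp]
  · rw [Category.assoc, Category.assoc, extendZero_none, comp_zero, restr_comp_restr]
    exact extendZero_none F S' _

lemma extendZero_app {F} {G : (Type w)ᵒᵖ ⥤ C} [PreservesFiniteProducts F]
    [PreservesFiniteProducts G] (f : F ⟶ G) (S : Type w) :
    extendZero F S ≫ f.app _ = f.app _ ≫ extendZero G S := by
  apply hom_ext_option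
  · rw [Category.assoc, Category.assoc, extendZero_some, ← restr_naturality, ← Category.assoc,
      extendZero_some, Category.id_comp, Category.comp_id]
  · rw [Category.assoc, Category.assoc, extendZero_none, ← restr_naturality, ← Category.assoc,
      extendZero_none, zero_comp, comp_zero]

end

lemma extendZero_restr_eq_add [Preadditive C] {X S : Type w} {a b c : X → Option S}
    (h : IsSum (T := typeToPointed.obj S) a b c) :
    extendZero F S ≫ restr F a = extendZero F S ≫ restr F b + extendZero F S ≫ restr F c := by
  apply hom_ext_compl (fun x => b x = none)
  · have hb : b ∘ Subtype.val = fun x : {x // b x = none} => none := funext fun x => x.2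
    have ha : a ∘ Subtype.val = fun x : {x // b x = none} => c x := funext fun x =>
      (h x).elim And.right fun ⟨hc, ha⟩ => ha.trans (x.2.trans hc.symm)
    rw [Preadditive.add_comp, Category.assoc, Category.assoc, Category.assoc, restr_comp_restr,
      restr_comp_restr, restr_comp_restr, ha, hb, extendZero_none, zero_add]
  · have hc : c ∘ Subtype.val = fun x : {x // ¬ b x = none} => none := funext fun x =>
      (h x).elim (fun h => (x.2 h.1).elim) And.left
    have ha : a ∘ Subtype.val = fun x : {x // ¬ b x = none} => b x := funext fun x =>
      (h x).elim (fun h => (x.2 h.1).elim) And.right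
    rw [Preadditive.add_comp, Category.assoc, Category.assoc, Category.assoc, restr_comp_restr,
      restr_comp_restr, restr_comp_restr, ha, hc, extendZero_none, add_zero]

end ExtendZero

end Restriction

section Sums

variable {C : Type u} [Category.{v} C]

section

variable [Preadditive C] {P : (Type w)ᵒᵖ ⥤ C} {T : Pointed.{w}}

/-- A morphism `z : A ⟶ P.obj (op T)`, thought of as a generalized section of `P` over `T`, is
additive if its pullback along partial functions with values in `T` is additive. -/
def IsAdditiveSection {A : C} (z : A ⟶ P.obj (op T)) : Prop :=
  ∀ ⦃Y : Type w⦄ ⦃a b c : Y → T⦄, IsSum a b c → z ≫ restr P a = z ≫ restr P b + z ≫ restr P c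

namespace IsAdditiveSection

variable {A B : C} {z : A ⟶ P.obj (op T)}

lemma comp_left (hz : IsAdditiveSection z) (g : B ⟶ A) : IsAdditiveSection (g ≫ z) :=
  fun Y a b c h => by
    rw [Category.assoc, Category.assoc, Category.assoc, hz h, Preadditive.comp_add]

lemma comp_app (hz : IsAdditiveSection z) {Q : (Type w)ᵒᵖ ⥤ C} (f : P ⟶ Q) :
    IsAdditiveSection (z ≫ f.app (op T)) := fun Y a b c h => by
  rw [Category.assoc, Category.assoc, Category.assoc, ← restr_naturality, ← restr_naturality,
    ← restr_naturality, ← Category.assoc, hz h, Preadditive.add_comp, Category.assoc,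
    Category.assoc]

end IsAdditiveSection

end

/-- The functor `Y ↦ Y × X`. -/
def prodRight (X : Type w) : Type w ⥤ Type w where
  obj Y := Y × X
  map f := TypeCat.ofHom (Prod.map f id)

variable [Preadditive C] [HasCoproducts.{w} C] [HasCokernels C]

/-- The additive functor obtained from `Y ↦ P (Y × X)` by linear extension. -/
noncomputable abbrev parametrizedExtension (P : (Type w)ᵒᵖ ⥤ C) (X : Type w) :
    (ModuleCat.{w} ℤ)ᵒᵖ ⥤ C :=
  AdditiveExtension.functor ((prodRight X).op ⋙ P)

/-- The value of `P` on the type of partial functions, in its linear extension. -/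
noncomputable abbrev freePresheaf (P : (Type w)ᵒᵖ ⥤ C) (X : Type w) : Pointed.{w}ᵒᵖ ⥤ C :=
  (partialFunctions X ⋙ intFree).op ⋙ parametrizedExtension P X

/-- The additive counterpart of `freePresheaf P X`, which preserves finite products. -/
noncomputable abbrev sumsPresheaf (P : (Type w)ᵒᵖ ⥤ C) (X : Type w) : Pointed.{w}ᵒᵖ ⥤ C :=
  (PartialSums.functor X).op ⋙ parametrizedExtension P X

instance sumsPresheaf_preservesFiniteProducts (P : (Type w)ᵒᵖ ⥤ C) (X : Type w) :
    PreservesFiniteProducts (typeToPointed.{w}.op ⋙ sumsPresheaf P X) :=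
  preservesFiniteProducts_typeToPointed_op_comp fun {S T α β γ} h => by
    change (parametrizedExtension P X).map ((PartialSums.functor X).map α).op =
      (parametrizedExtension P X).map ((PartialSums.functor X).map β).op +
        (parametrizedExtension P X).map ((PartialSums.functor X).map γ).op
    rw [← Functor.map_add, PartialSums.functor_map_eq_add h]
    rfl

section

variable (P : (Type w)ᵒᵖ ⥤ C) (X : Type w) {M N : ModuleCat.{w} ℤ} {Y Z : Type w}

/-- The canonical maps to the linear extension. -/
noncomputable def parametrizedInn [Nonempty Y] (h : M ⟶ intFree.obj Y) :
    P.obj (op (Y × X)) ⟶ (parametrizedExtension P X).obj (op M) :=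
  AdditiveExtension.inn ((prodRight X).op ⋙ P) h

lemma parametrizedInn_map [Nonempty Y] (h : M ⟶ intFree.obj Y) (μ : N ⟶ M) :
    parametrizedInn P X h ≫ (parametrizedExtension P X).map μ.op = parametrizedInn P X (μ ≫ h) :=
  AdditiveExtension.inn_map _ h μ

lemma parametrizedInn_sub [Nonempty Y] (h h' : M ⟶ intFree.obj Y) :
    parametrizedInn P X (h - h') = parametrizedInn P X h - parametrizedInn P X h' :=
  AdditiveExtension.inn_sub _ h h'

lemma restr_parametrizedInn [Nonempty Y] [Nonempty Z] (f : Y → Z) (h : M ⟶ intFree.obj Y) :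
    restr P (Prod.map f id) ≫ parametrizedInn P X h =
      parametrizedInn P X (h ≫ intFree.map (TypeCat.ofHom f)) :=
  AdditiveExtension.map_comp_inn ((prodRight X).op ⋙ P) (TypeCat.ofHom f) h

lemma exists_parametrizedInn_comp_eq {h : M ⟶ intFree.obj Y} {m : M} {y : Y} [Nonempty Y]
    (hm : h m = Finsupp.single y 1) :
    ∃ r, parametrizedInn P X h ≫ r = restr P fun x => (y, x) :=
  ⟨AdditiveExtension.evalAt ((prodRight X).op ⋙ P) m ≫ restr P fun x => (PUnit.unit, x), by
    refine (Category.assoc _ _ _).symm.trans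
      ((AdditiveExtension.inn_evalAt ((prodRight X).op ⋙ P) hm =≫ _).trans ?_)
    exact restr_comp_restr P _ _⟩

end

variable {P : (Type w)ᵒᵖ ⥤ C} {X : Type w} {M N : ModuleCat.{w} ℤ} {S T : Pointed.{w}}

variable (P) in
/-- The pullback of partial functions to `P` followed by the canonical map to the linear
extension. -/
noncomputable def toExtension (h : M ⟶ intFree.obj (X → T)) :
    P.obj (op T) ⟶ (parametrizedExtension P X).obj (op M) :=
  restr P (fun p : (X → T) × X => p.1 p.2) ≫ parametrizedInn P X h

lemma toExtension_map (h : M ⟶ intFree.obj (X → T)) (μ : N ⟶ M) :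
    toExtension P h ≫ (parametrizedExtension P X).map μ.op = toExtension P (μ ≫ h) := by
  rw [toExtension, toExtension, Category.assoc, parametrizedInn_map]

lemma restr_toExtension (h : M ⟶ intFree.obj (X → S)) (φ : S ⟶ T) :
    restr P φ.toFun ≫ toExtension P h =
      toExtension P (h ≫ intFree.map (TypeCat.ofHom (φ.toFun ∘ ·))) := by
  rw [toExtension, toExtension, ← restr_parametrizedInn, ← Category.assoc, ← Category.assoc,
    restr_comp_restr, restr_comp_restr]

lemma toExtension_sub (h h' : M ⟶ intFree.obj (X → T)) :
    toExtension P (h - h') = toExtension P h - toExtension P h' := by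
  rw [toExtension, toExtension, toExtension, parametrizedInn_sub, Preadditive.comp_sub]

variable (P X) in
/-- The canonical map from `P` to the values of its linear extension on free groups. -/
noncomputable def toFree : (forget Pointed.{w}).op ⋙ P ⟶ freePresheaf P X where
  app T := toExtension P (𝟙 (intFree.obj (X → T.unop)))
  naturality S T φ := by
    refine (restr_toExtension _ φ.unop).trans (Eq.trans ?_ (toExtension_map _ _).symm)
    exact congrArg (toExtension P) ((Category.id_comp _).trans (Category.comp_id _).symm)

/- The value at the identity partial function recovers a section over `T`. -/
instance isSplitMono_toFree_app (P : (Type w)ᵒᵖ ⥤ C) (T : Pointed.{w}) :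
    IsSplitMono ((toFree P T).app (op T)) := by
  obtain ⟨r, hr⟩ := exists_parametrizedInn_comp_eq P T (h := 𝟙 (intFree.obj (T → T)))
    (m := (Finsupp.single id 1 : (T → T) →₀ ℤ)) (y := id) rfl
  refine ⟨⟨r, (Category.assoc _ _ _).trans ((_ ≫= hr).trans ?_)⟩⟩
  exact (restr_comp_restr P _ _).trans (P.map_id _)

variable (P X) in
/-- The map induced by the projections `PartialSums.π`. -/
noncomputable def sumsToFree : sumsPresheaf P X ⟶ freePresheaf P X :=
  Functor.whiskerRight (NatTrans.op (PartialSums.π X)) (parametrizedExtension P X)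

namespace IsAdditiveSection

variable {A : C} {z : A ⟶ P.obj (op T)}

lemma comp_toExtension_relation (hz : IsAdditiveSection z)
    (k : M ⟶ intFree.obj (SumTriple X T)) :
    z ≫ toExtension P (k ≫ PartialSums.relation X T) = 0 := by
  have toExtension_comp_map (t : SumTriple X T → X → T) :
      toExtension P (k ≫ intFree.map (TypeCat.ofHom t)) =
        restr P (fun p : SumTriple X T × X => t p.1 p.2) ≫ parametrizedInn P X k := by
    rw [toExtension, ← restr_parametrizedInn, ← Category.assoc, restr_comp_restr]
  have hsum := hz (Y := SumTriple X T × X) fun p => p.1.isSum p.2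
  rw [PartialSums.relation, Preadditive.comp_sub, Preadditive.comp_sub, toExtension_sub,
    toExtension_sub, toExtension_comp_map, toExtension_comp_map, toExtension_comp_map,
    Preadditive.comp_sub, Preadditive.comp_sub, ← Category.assoc, hsum,
    Preadditive.add_comp, Category.assoc, Category.assoc]
  abel

lemma comp_toExtension_congr [Projective M] (hz : IsAdditiveSection z)
    {h h' : M ⟶ intFree.obj (X → T)}
    (hh : h ≫ PartialSums.proj X T = h' ≫ PartialSums.proj X T) :
    z ≫ toExtension P h = z ≫ toExtension P h' := by
  obtain ⟨k, hk⟩ := PartialSums.exists_comp_relation_eq_sub hh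
  rw [← sub_eq_zero, ← Preadditive.comp_sub, ← toExtension_sub, ← hk]
  exact hz.comp_toExtension_relation k

end IsAdditiveSection

section

variable {E : Type*} [Category* E] {U : E ⥤ Pointed.{w}} {F : Eᵒᵖ ⥤ C}
  (τ : F ⟶ U.op ⋙ (forget Pointed.{w}).op ⋙ P)
  (hτ : ∀ S, IsAdditiveSection (T := U.obj (unop S)) (τ.app S))

variable (X) in
/-- A natural family of additive sections induces a map to `sumsPresheaf`. -/
noncomputable def liftSums : F ⟶ U.op ⋙ sumsPresheaf P X where
  app S := τ.app S ≫ toExtension P (PartialSums.splitting X (U.obj S.unop))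
  naturality S S' g := by
    let T := U.obj S.unop
    let T' := U.obj S'.unop
    let φ : T' ⟶ T := U.map g.unop
    let σ := PartialSums.splitting X
    have natural : (σ T' ≫ intFree.map (TypeCat.ofHom (φ.toFun ∘ ·))) ≫ PartialSums.proj X T =
        ((PartialSums.functor X).map φ ≫ σ T) ≫ PartialSums.proj X T := by
      rw [Category.assoc, Category.assoc, PartialSums.map_proj, PartialSums.splitting_proj,
        Category.comp_id, ← Category.assoc, PartialSums.splitting_proj]
      exact Category.id_comp _
    calc
      F.map g ≫ τ.app S' ≫ toExtension P (σ T') =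
          τ.app S ≫ restr P φ.toFun ≫ toExtension P (σ T') := τ.naturality_assoc g _
      _ = τ.app S ≫ toExtension P (σ T' ≫ intFree.map (TypeCat.ofHom (φ.toFun ∘ ·))) :=
        congrArg (τ.app S ≫ ·) (restr_toExtension _ φ)
      _ = τ.app S ≫ toExtension P ((PartialSums.functor X).map φ ≫ σ T) :=
        (hτ S).comp_toExtension_congr natural
      _ = τ.app S ≫ toExtension P (σ T) ≫ (sumsPresheaf P X).map φ.op :=
        congrArg (τ.app S ≫ ·) (toExtension_map _ _).symm
      _ = (τ.app S ≫ toExtension P (σ T)) ≫ (sumsPresheaf P X).map φ.op :=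
        (Category.assoc _ _ _).symm

lemma liftSums_sumsToFree :
    liftSums X τ hτ ≫ U.op.whiskerLeft (sumsToFree P X) = τ ≫ U.op.whiskerLeft (toFree P X) := by
  ext S
  have app_congr : τ.app S ≫ toExtension P (PartialSums.proj X _ ≫ PartialSums.splitting X _) =
      τ.app S ≫ toExtension P (𝟙 (intFree.obj (X → U.obj S.unop))) :=
    (hτ S).comp_toExtension_congr (by simp)
  exact (Category.assoc _ _ _).trans ((τ.app S ≫= toExtension_map _ _).trans app_congr)

lemma comp_liftSums {G : Eᵒᵖ ⥤ C} (g : G ⟶ F) :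
    g ≫ liftSums X τ hτ = liftSums X (g ≫ τ) fun S => (hτ S).comp_left (g.app S) := by
  ext S
  exact (Category.assoc _ _ _).symm

end

end Sums

section Descent

variable {C : Type u} [Category.{v} C] [HasPushouts C] {E : Type*} [Category* E]

/- The pushout is computed pointwise, so that a retraction `r` of `k.app S` induces a map from its
value at `S` to `Q'.obj S`. -/
lemma app_comp_retraction_comp_app {N A Q Q' : E ⥤ C} {k : N ⟶ Q} {k' : N ⟶ Q'} {g : A ⟶ Q}
    {g' : A ⟶ Q'} (h : g ≫ pushout.inl k k' = g' ≫ pushout.inr k k') {S : E}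
    {r : Q.obj S ⟶ N.obj S} (hr : k.app S ≫ r = 𝟙 _) :
    g.app S ≫ r ≫ k'.app S = g'.app S := by
  have hp := (IsPushout.of_hasPushout k k').map ((evaluation E C).obj S)
  have hw : k.app S ≫ r ≫ k'.app S = k'.app S ≫ 𝟙 _ := by
    rw [← Category.assoc, hr, Category.id_comp, Category.comp_id]
  calc
    g.app S ≫ r ≫ k'.app S = g.app S ≫ (pushout.inl k k').app S ≫ hp.desc _ _ hw :=
      congrArg (g.app S ≫ ·) (hp.inl_desc _ _ hw).symm
    _ = g'.app S ≫ (pushout.inr k k').app S ≫ hp.desc _ _ hw := by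
      rw [← NatTrans.comp_app_assoc, h, NatTrans.comp_app_assoc]
    _ = g'.app S := (congrArg (g'.app S ≫ ·) (hp.inr_desc _ _ hw)).trans (Category.comp_id _)

lemma exists_comp_eq_of_isSplitMono {J : Type*} [Category* J] {K : J ⥤ E ⥤ C} {c : Cocone K}
    (hc : ∀ {N : E ⥤ C} {f g : c.pt ⟶ N}, (∀ j, c.ι.app j ≫ f = c.ι.app j ≫ g) → f = g)
    (s : Cocone K) {I : Type*} {Q : I → E ⥤ C} (k : ∀ i, s.pt ⟶ Q i)
    (hk : ∀ S, ∃ i, IsSplitMono ((k i).app S))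
    (hg : ∀ i, ∃ g : c.pt ⟶ Q i, ∀ j, c.ι.app j ≫ g = s.ι.app j ≫ k i) :
    ∃ d : c.pt ⟶ s.pt, ∀ j, c.ι.app j ≫ d = s.ι.app j := by
  choose i hi using hk
  choose g hg using hg
  let d (S : E) : c.pt.obj S ⟶ s.pt.obj S := (g (i S)).app S ≫ retraction ((k (i S)).app S)
  have d_comp (S : E) (i' : I) : d S ≫ (k i').app S = (g i').app S := by
    have agree : g (i S) ≫ pushout.inl (k (i S)) (k i') = g i' ≫ pushout.inr (k (i S)) (k i') :=
      hc fun j => by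
        rw [← Category.assoc, ← Category.assoc, hg, hg, Category.assoc, Category.assoc,
          pushout.condition]
    exact (Category.assoc _ _ _).trans (app_comp_retraction_comp_app agree (IsSplitMono.id _))
  refine ⟨{ app := d, naturality := fun S T f => ?_ }, fun j => ?_⟩
  · rw [← cancel_mono ((k (i T)).app T), Category.assoc, d_comp, Category.assoc,
      (k (i T)).naturality, ← Category.assoc, d_comp, (g (i T)).naturality]
  · ext S
    rw [← cancel_mono ((k (i S)).app S), NatTrans.comp_app, Category.assoc, d_comp]
    exact congrArg (·.app S) (hg (i S) j)

end Descent

section ExtendZeroHom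

variable {C : Type u} [Category.{v} C]

/-- Restriction from `Option S` to `S`. -/
abbrev restrictSome (D : (Type w)ᵒᵖ ⥤ C) :
    typeToPointed.{w}.op ⋙ (forget Pointed.{w}).op ⋙ D ⟶ D :=
  Functor.whiskerRight (NatTrans.op typeToPointedForgetAdjunction.unit) D

variable [HasZeroMorphisms C] {F G : (Type w)ᵒᵖ ⥤ C} [PreservesFiniteProducts F]
  [PreservesFiniteProducts G]

variable (F) in
/-- Extension by zero as a natural transformation. -/
noncomputable def extendZeroHom : F ⟶ typeToPointed.op ⋙ (forget Pointed.{w}).op ⋙ F where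
  app S := extendZero F S.unop
  naturality _ _ φ := (extendZero_restr F φ.unop).symm

lemma extendZeroHom_restrictSome : extendZeroHom F ≫ restrictSome F = 𝟙 F := by
  ext S
  exact extendZero_some F S.unop

lemma extendZeroHom_naturality (f : F ⟶ G) :
    f ≫ extendZeroHom G = extendZeroHom F ≫
      typeToPointed.op.whiskerLeft ((forget Pointed).op.whiskerLeft f) := by
  ext S
  exact (extendZero_app f S.unop).symm

end ExtendZeroHom

section Adjunction

variable {C : Type u} [Category.{v} C] {E : Type*} [Category* E] {L : Type w ⥤ E}
  {U : E ⥤ Type w} (adj : L ⊣ U)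

/-- The map to the value at `L.obj (U.obj S)` induced by the counit. -/
def toFreeCover (P : Eᵒᵖ ⥤ C) : P ⟶ U.op ⋙ L.op ⋙ P :=
  Functor.whiskerRight (NatTrans.op adj.counit) P

lemma comp_toFreeCover {P Q : Eᵒᵖ ⥤ C} (f : P ⟶ Q) :
    f ≫ toFreeCover adj Q =
      toFreeCover adj P ≫ Functor.whiskerLeft U.op (Functor.whiskerLeft L.op f) := by
  ext S
  exact (f.naturality _).symm

instance [∀ S, IsSplitEpi (adj.counit.app S)] (P : Eᵒᵖ ⥤ C) (S : Eᵒᵖ) :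
    IsSplitMono ((toFreeCover adj P).app S) :=
  inferInstanceAs (IsSplitMono (P.map (adj.counit.app S.unop).op))

variable [Preadditive C] [PreservesFiniteProducts L.op]

/-- Extension by zero of the restrictions of `f` along the counit. -/
noncomputable def extendZeroCover {F P : Eᵒᵖ ⥤ C} [PreservesFiniteProducts F] (f : F ⟶ P) :
    F ⟶ (U ⋙ typeToPointed).op ⋙ (forget Pointed.{w}).op ⋙ L.op ⋙ P :=
  toFreeCover adj F ≫ U.op.whiskerLeft (extendZeroHom (L.op ⋙ F) ≫
    typeToPointed.op.whiskerLeft ((forget Pointed).op.whiskerLeft (L.op.whiskerLeft f)))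

variable {F G P : Eᵒᵖ ⥤ C} [PreservesFiniteProducts F] [PreservesFiniteProducts G] (f : F ⟶ P)

lemma isAdditiveSection_extendZeroCover (S : Eᵒᵖ) :
    IsAdditiveSection (P := L.op ⋙ P) (T := (U ⋙ typeToPointed).obj S.unop)
      ((extendZeroCover adj f).app S) := by
  have : IsAdditiveSection (T := typeToPointed.obj (U.obj S.unop))
    (extendZero (L.op ⋙ F) (U.obj S.unop)) := fun _ _ _ _ => extendZero_restr_eq_add (L.op ⋙ F)
  exact (this.comp_app (Functor.whiskerLeft L.op f)).comp_left ((toFreeCover adj F).app S)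

lemma extendZeroCover_restrictSome :
    extendZeroCover adj f ≫ U.op.whiskerLeft (restrictSome (L.op ⋙ P)) = f ≫ toFreeCover adj P := by
  have hsome : (extendZeroHom (L.op ⋙ F) ≫
      typeToPointed.op.whiskerLeft ((forget Pointed).op.whiskerLeft (L.op.whiskerLeft f))) ≫
        restrictSome (L.op ⋙ P) = L.op.whiskerLeft f := by
    have hφ : typeToPointed.op.whiskerLeft ((forget Pointed).op.whiskerLeft (L.op.whiskerLeft f)) ≫
        restrictSome (L.op ⋙ P) = restrictSome (L.op ⋙ F) ≫ L.op.whiskerLeft f := by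
      ext S
      exact ((L.op.whiskerLeft f).naturality _).symm
    rw [Category.assoc, hφ, ← Category.assoc, extendZeroHom_restrictSome, Category.id_comp]
  exact (Category.assoc _ _ _).trans ((congrArg (toFreeCover adj F ≫ U.op.whiskerLeft ·)
    hsome).trans (comp_toFreeCover adj f).symm)

lemma comp_extendZeroCover (g : G ⟶ F) :
    g ≫ extendZeroCover adj f = extendZeroCover adj (g ≫ f) := by
  have hg := extendZeroHom_naturality (L.op.whiskerLeft g) =≫
    typeToPointed.op.whiskerLeft ((forget Pointed).op.whiskerLeft (L.op.whiskerLeft f))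
  calc
    g ≫ extendZeroCover adj f = (g ≫ toFreeCover adj F) ≫ U.op.whiskerLeft
        (extendZeroHom (L.op ⋙ F) ≫ typeToPointed.op.whiskerLeft
          ((forget Pointed).op.whiskerLeft (L.op.whiskerLeft f))) :=
      (Category.assoc _ _ _).symm
    _ = toFreeCover adj G ≫ U.op.whiskerLeft ((L.op.whiskerLeft g ≫ extendZeroHom (L.op ⋙ F)) ≫
        typeToPointed.op.whiskerLeft ((forget Pointed).op.whiskerLeft (L.op.whiskerLeft f))) := by
      rw [comp_toFreeCover, Category.assoc, ← Functor.whiskerLeft_comp, Category.assoc]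
    _ = extendZeroCover adj (g ≫ f) := by
      rw [hg, Category.assoc]
      rfl

variable [HasCoproducts.{w} C] [HasCokernels C] (X : Type w)

/-- The map to the presheaf of sums attached to extension by zero. -/
noncomputable def toSums : F ⟶ (U ⋙ typeToPointed).op ⋙ sumsPresheaf (L.op ⋙ P) X :=
  liftSums X (extendZeroCover adj f) (isAdditiveSection_extendZeroCover adj f)

lemma toSums_sumsToFree :
    toSums adj f X ≫ (U ⋙ typeToPointed).op.whiskerLeft (sumsToFree (L.op ⋙ P) X) =
      extendZeroCover adj f ≫ (U ⋙ typeToPointed).op.whiskerLeft (toFree (L.op ⋙ P) X) :=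
  liftSums_sumsToFree _ _

lemma comp_toSums (g : G ⟶ F) : g ≫ toSums adj f X = toSums adj (g ≫ f) X := by
  rw [toSums, comp_liftSums]
  congr 1
  exact comp_extendZeroCover adj f g

end Adjunction

section ColimitAmongProductPreserving

variable {C : Type u} [Category.{v} C] {E : Type*} [Category* E] {J : Type*} [Category* J]
  {K : J ⥤ Eᵒᵖ ⥤ C} {c : Cocone K}

variable (c) in
/-- The universal property of a colimit cocone, tested only on cocones whose point preserves finite
products. -/
def IsColimitAmongProductPreserving : Prop :=
  ∀ s : Cocone K, PreservesFiniteProducts s.pt →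
    ∃! g : c.pt ⟶ s.pt, ∀ j, c.ι.app j ≫ g = s.ι.app j

namespace IsColimitAmongProductPreserving

lemma hom_ext (hc : IsColimitAmongProductPreserving c) {G : Eᵒᵖ ⥤ C} [PreservesFiniteProducts G]
    {f g : c.pt ⟶ G} (h : ∀ j, c.ι.app j ≫ f = c.ι.app j ≫ g) : f = g :=
  (hc (c.extend f) ‹_›).unique (fun _ => rfl) fun j => (h j).symm

variable [Preadditive C] [HasCoproducts.{w} C] [HasCokernels C] {L : Type w ⥤ E}
  {U : E ⥤ Type w} [PreservesFiniteProducts L.op] [PreservesFiniteProducts U.op]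

instance (P : (Type w)ᵒᵖ ⥤ C) (X : Type w) :
    PreservesFiniteProducts ((U ⋙ typeToPointed).op ⋙ sumsPresheaf P X) :=
  inferInstanceAs (PreservesFiniteProducts (U.op ⋙ typeToPointed.op ⋙ sumsPresheaf P X))

variable [∀ j, PreservesFiniteProducts (K.obj j)]

/-- The cocone of the extensions by zero of the legs of a cocone. -/
noncomputable def extendZeroCocone (adj : L ⊣ U) (s : Cocone K) : Cocone K where
  pt := (U ⋙ typeToPointed).op ⋙ (forget Pointed.{w}).op ⋙ L.op ⋙ s.pt
  ι :=
    { app j := extendZeroCover adj (s.ι.app j)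
      naturality _ _ f := (comp_extendZeroCover adj _ _).trans
        ((congrArg (extendZeroCover adj) (s.w f)).trans (Category.comp_id _).symm) }

/-- The cocone of the maps to presheaves of sums attached to the legs of a cocone. -/
noncomputable def toSumsCocone (adj : L ⊣ U) (s : Cocone K) (X : Type w) : Cocone K where
  pt := (U ⋙ typeToPointed).op ⋙ sumsPresheaf (L.op ⋙ s.pt) X
  ι :=
    { app j := toSums adj (s.ι.app j) X
      naturality _ _ f := (comp_toSums adj _ X _).trans
        ((congrArg (toSums adj · X) (s.w f)).trans (Category.comp_id _).symm) }

variable [PreservesFiniteProducts c.pt]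

lemma hom_ext_of_adjunction (adj : L ⊣ U) [∀ S, IsSplitEpi (adj.counit.app S)]
    (hc : IsColimitAmongProductPreserving c) {N : Eᵒᵖ ⥤ C} {f g : c.pt ⟶ N}
    (h : ∀ j, c.ι.app j ≫ f = c.ι.app j ≫ g) : f = g := by
  have toSums_eq (X : Type w) : toSums adj f X = toSums adj g X :=
    hc.hom_ext fun j => by rw [comp_toSums, comp_toSums, h]
  have extendZeroCover_eq : extendZeroCover adj f = extendZeroCover adj g := by
    ext S
    let T := typeToPointed.obj (U.obj S.unop)
    have hT := toSums_eq T =≫ (U ⋙ typeToPointed).op.whiskerLeft (sumsToFree (L.op ⋙ N) T)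
    rw [toSums_sumsToFree, toSums_sumsToFree] at hT
    exact (cancel_mono ((toFree (L.op ⋙ N) T).app (op T))).1 (congrArg (·.app S) hT)
  have toFreeCover_eq : f ≫ toFreeCover adj N = g ≫ toFreeCover adj N := by
    rw [← extendZeroCover_restrictSome, ← extendZeroCover_restrictSome, extendZeroCover_eq]
  ext S
  exact (cancel_mono ((toFreeCover adj N).app S)).1 (congrArg (·.app S) toFreeCover_eq)

variable [HasPushouts C]

lemma exists_desc_extendZeroCocone (adj : L ⊣ U) [∀ S, IsSplitEpi (adj.counit.app S)]
    (hc : IsColimitAmongProductPreserving c) (s : Cocone K) :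
    ∃ d : c.pt ⟶ (extendZeroCocone adj s).pt,
      ∀ j, c.ι.app j ≫ d = (extendZeroCocone adj s).ι.app j :=
  exists_comp_eq_of_isSplitMono (hc.hom_ext_of_adjunction adj) (extendZeroCocone adj s)
    (fun X => (U ⋙ typeToPointed).op.whiskerLeft (toFree (L.op ⋙ s.pt) X))
    (fun S => ⟨_, isSplitMono_toFree_app (L.op ⋙ s.pt) (typeToPointed.obj (U.obj S.unop))⟩)
    fun X => by
      obtain ⟨g, hg, -⟩ := hc (toSumsCocone adj s X) (by dsimp only [toSumsCocone]; infer_instance)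
      refine ⟨g ≫ (U ⋙ typeToPointed).op.whiskerLeft (sumsToFree (L.op ⋙ s.pt) X), fun j => ?_⟩
      exact (Category.assoc _ _ _).symm.trans
        ((hg j =≫ _).trans (toSums_sumsToFree adj (s.ι.app j) X))

theorem nonempty_isColimit (adj : L ⊣ U) [∀ S, IsSplitEpi (adj.counit.app S)]
    (hc : IsColimitAmongProductPreserving c) : Nonempty (IsColimit c) := by
  have exists_desc (s : Cocone K) : ∃ d : c.pt ⟶ s.pt, ∀ j, c.ι.app j ≫ d = s.ι.app j := by
    obtain ⟨d, hd⟩ := hc.exists_desc_extendZeroCocone adj s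
    refine exists_comp_eq_of_isSplitMono (hc.hom_ext_of_adjunction adj) s
      (fun _ : Unit => toFreeCover adj s.pt) (fun S => ⟨⟨⟩, inferInstance⟩) fun _ =>
        ⟨d ≫ U.op.whiskerLeft (restrictSome (L.op ⋙ s.pt)), fun j => ?_⟩
    exact (Category.assoc _ _ _).symm.trans
      ((hd j =≫ _).trans (extendZeroCover_restrictSome adj (s.ι.app j)))
  choose d hd using exists_desc
  exact ⟨{ desc := d
           fac := hd
           uniq _ _ hm := hc.hom_ext_of_adjunction adj fun j => by rw [hm, hd] }⟩

end IsColimitAmongProductPreserving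

end ColimitAmongProductPreserving

section Vanishing

variable {C : Type u} [Category.{v} C] [Preadditive C]

/- The pullbacks of an extension by zero along the sections `S → I × S` separate the elements of
`I`, so that a nonzero value bounds the size of `I` by that of a Hom set of `C`. -/
lemma isZero_of_not_univLE (h : ¬ UnivLE.{w, v}) (G : (Type w)ᵒᵖ ⥤ C) [PreservesFiniteProducts G]
    (S : Type w) : IsZero (G.obj (op S)) := by
  classical
  rw [IsZero.iff_id_eq_zero]
  by_contra hne
  refine h ⟨fun I => ?_⟩
  let t (i : I) : I × S → Option S := fun p => if p.1 = i then some p.2 else none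
  let e (i : I) : G.obj (op S) ⟶ G.obj (op (I × S)) := extendZero G S ≫ restr G (t i)
  have e_restr_self (i : I) : e i ≫ restr G (fun s : S => (i, s)) = 𝟙 _ := by
    rw [Category.assoc, restr_comp_restr, ← extendZero_some]
    congr 2
    funext s
    exact if_pos rfl
  have e_restr_ne {i i' : I} (hi : i ≠ i') : e i' ≫ restr G (fun s : S => (i, s)) = 0 := by
    rw [Category.assoc, restr_comp_restr, ← extendZero_none G S S]
    congr 2
    funext s
    exact if_neg hi
  refine small_of_injective (f := e) fun i i' hi => ?_
  by_contra hii
  exact hne ((e_restr_self i).symm.trans ((hi =≫ _).trans (e_restr_ne hii)))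

lemma nonempty_isColimit_of_not_univLE (h : ¬ UnivLE.{w, v}) {E : Type*} [Category* E]
    {L : Type w ⥤ E} {U : E ⥤ Type w} (adj : L ⊣ U) [PreservesFiniteProducts L.op]
    [∀ S, IsSplitEpi (adj.counit.app S)] {J : Type*} [Category* J]
    {K : J ⥤ Eᵒᵖ ⥤ C} {c : Cocone K} [∀ j, PreservesFiniteProducts (K.obj j)]
    [PreservesFiniteProducts c.pt] : Nonempty (IsColimit c) := by
  have isZero_obj (F : Eᵒᵖ ⥤ C) [PreservesFiniteProducts F] (S : Eᵒᵖ) : IsZero (F.obj S) :=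
    (isZero_of_not_univLE h (L.op ⋙ F) (U.obj S.unop)).of_mono ((toFreeCover adj F).app S)
  exact ⟨{
    desc _ := 0
    fac _ j := by
      ext S
      exact (isZero_obj (K.obj j) S).eq_of_src _ _
    uniq _ _ _ := by
      ext S
      exact (isZero_obj c.pt S).eq_of_src _ _ }⟩

end Vanishing

section Sheaf

variable {C : Type u} [Category.{v} C] {E : Type*} [Category* E] [Preregular E]
  [FinitaryExtensive E] [∀ S : E, Projective S]

/- The functor `colim : (J ⥤ C) ⥤ C` is additive, and additive functors preserve finite products. -/
lemma isSheaf_colimit [Preadditive C] {J : Type*} [Category* J] [HasColimitsOfShape J C]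
    (F : J ⥤ Sheaf (coherentTopology E) C) :
    Presheaf.IsSheaf (coherentTopology E)
      (colimit (F ⋙ sheafToPresheaf (coherentTopology E) C)) := by
  let G := F ⋙ sheafToPresheaf (coherentTopology E) C
  let i : colimit G ≅ G.flip ⋙ colim :=
    (colimit.isColimit G).coconePointUniqueUpToIso (pointwiseIsColimit G)
  rw [Presheaf.isSheaf_of_iso_iff i, Presheaf.isSheaf_iff_preservesFiniteProducts_of_projective]
  have : PreservesFiniteProducts G.flip :=
    ⟨fun _ => preservesLimitsOfShape_of_evaluation _ _ fun j =>
      inferInstanceAs (PreservesLimitsOfShape _ (F.obj j).obj)⟩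
  infer_instance

lemma IsColimitAmongProductPreserving.of_isColimit {J : Type*} [Category* J]
    {K : J ⥤ Sheaf (coherentTopology E) C} {c : Cocone K} (hc : IsColimit c) :
    IsColimitAmongProductPreserving ((sheafToPresheaf _ _).mapCocone c) := by
  intro s hs
  let G : Sheaf (coherentTopology E) C :=
    ⟨s.pt, (Presheaf.isSheaf_iff_preservesFiniteProducts_of_projective _).2 hs⟩
  have hff := fullyFaithfulSheafToPresheaf (coherentTopology E) C
  let t : Cocone K :=
    { pt := G
      ι :=
        { app j := ⟨s.ι.app j⟩
          naturality _ _ f := hff.map_injective (s.ι.naturality f) } }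
  refine ⟨(hc.desc t).hom, fun j => congrArg (·.hom) (hc.fac t j), fun g hg => ?_⟩
  exact congrArg (·.hom) (hc.uniq t ⟨g⟩ fun j => hff.map_injective (hg j))

theorem preservesColimits_sheafToPresheaf [Preadditive C] [HasColimits C] {L : Type w ⥤ E}
    {U : E ⥤ Type w} (adj : L ⊣ U) [U.Faithful] [PreservesFiniteCoproducts U] :
    PreservesColimitsOfSize (sheafToPresheaf (coherentTopology E) C) := by
  have := adj.leftAdjoint_preservesColimits
  have : PreservesFiniteCoproducts L := ⟨fun _ => inferInstance⟩
  have : PreservesFiniteProducts L.op := preservesFiniteProducts_op _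
  have : PreservesFiniteProducts U.op := preservesFiniteProducts_op _
  have (S : E) : IsSplitEpi (adj.counit.app S) :=
    ⟨⟨Projective.factorThru (𝟙 S) (adj.counit.app S), Projective.factorThru_comp _ _⟩⟩
  refine ⟨⟨fun {K} => ⟨fun {c} hc => ?_⟩⟩⟩
  have (j : _) : PreservesFiniteProducts ((K ⋙ sheafToPresheaf _ C).obj j) :=
    inferInstanceAs (PreservesFiniteProducts (K.obj j).obj)
  have : PreservesFiniteProducts ((sheafToPresheaf _ C).mapCocone c).pt :=
    inferInstanceAs (PreservesFiniteProducts c.pt.obj)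
  by_cases h : UnivLE.{w, v}
  · have : HasColimitsOfSize.{w, w} C := hasColimitsOfSizeOfUnivLE.{v, v, w, w} C
    exact (IsColimitAmongProductPreserving.of_isColimit hc).nonempty_isColimit adj
  · exact nonempty_isColimit_of_not_univLE h adj

end Sheaf

theorem stmt_3_general {C : Type u} [Category.{v} C] [Preadditive C] [HasColimits C]
    {E : Type*} [Category* E] [Preregular E] [FinitaryExtensive E] [∀ S : E, Projective S]
    {L : Type w ⥤ E} {U : E ⥤ Type w} (adj : L ⊣ U) [U.Faithful] [PreservesFiniteCoproducts U]
    (J : Type v) [SmallCategory J] (F : J ⥤ Sheaf (coherentTopology E) C) :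
    Presheaf.IsSheaf (coherentTopology E) (colimit (F ⋙ sheafToPresheaf (coherentTopology E) C)) ∧
      Nonempty (PreservesColimitsOfSize (sheafToPresheaf (coherentTopology E) C)) :=
  ⟨isSheaf_colimit F, ⟨preservesColimits_sheafToPresheaf adj⟩⟩

instance forget_stonean_preservesFiniteCoproducts :
    PreservesFiniteCoproducts (forget Stonean.{w}) :=
  inferInstanceAs
    (PreservesFiniteCoproducts (Stonean.toCompHaus.{w} ⋙ compHausToTop ⋙ forget TopCat))

/-- Let `C` be a preadditive category with finite biproducts and all small colimits.
For every small category `J` and diagram `F` of `C`-valued sheaves on `Stonean`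
(extremally disconnected compact Hausdorff spaces) for the coherent topology, the
colimit of the underlying presheaves (computed objectwise) is again a sheaf;
equivalently, the inclusion of sheaves into presheaves preserves all small colimits. -/
theorem stmt_3 {C : Type u} [Category.{v} C] [Preadditive C] [HasFiniteBiproducts C]
    [HasColimits C] (J : Type v) [SmallCategory J]
    (F : J ⥤ Sheaf (coherentTopology Stonean.{w}) C) :
    Presheaf.IsSheaf (coherentTopology Stonean.{w})
        (colimit (F ⋙ sheafToPresheaf (coherentTopology Stonean.{w}) C)) ∧
      Nonempty (PreservesColimits (sheafToPresheaf (coherentTopology Stonean.{w}) C)) :=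
  stmt_3_general Stonean.stoneCechAdjunction J F
end
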